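/- Let c_{α,β} ∈ ℂ be given for all multiindices α,β with |α|+|β| = 3 and set φ_3 := Σ_{|α|+|β|=3} (c_{α,β}/(α!β!)) z̄^α z^β. Define ψ_3^0 := i Σ_{|α|+|β|=3, (α'',β')≠(0,0)} ((⟨λ'',α''⟩+⟨λ',β'⟩)/(⟨|λ''|,α''⟩+⟨|λ'|,β'⟩)) · (c_{α,β}/(α!β!)) z̄^α z^β. Then T ψ_3^0 = − Σ_{j=1}^q 2λ_j z_j ∂φ_3/∂z_j − Σ_{j=q+1}^n 2λ_j z̄_j ∂φ_3/∂z̄_j. -/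

import Mathlib

/-!
Statement 0: the action of the derivation
`T = Σ_{j≤q} 2i|λ_j| z_j ∂/∂z_j + Σ_{j>q} 2i|λ_j| z̄_j ∂/∂z̄_j`
on the polynomial ring over ℂ in the 4n formal variables
`z_1,…,z_n, z̄_1,…,z̄_n, w_1,…,w_n, w̄_1,…,w̄_n`, at the level of coefficients.
We encode the variables as `Fin 4 × Fin n`, where `(0,j) = z_j`, `(1,j) = z̄_j`,
`(2,j) = w_j`, `(3,j) = w̄_j`.
-/

open MvPolynomial

attribute [local instance] Classical.propDecidable

noncomputable section

abbrev Var (n : ℕ) := Fin 4 × Fin n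

def zV {n : ℕ} (j : Fin n) : Var n := (0, j)
def zbV {n : ℕ} (j : Fin n) : Var n := (1, j)
def wV {n : ℕ} (j : Fin n) : Var n := (2, j)
def wbV {n : ℕ} (j : Fin n) : Var n := (3, j)

/-- The derivation `T = Σ_{1≤j≤q} 2i|λ_j| z_j ∂/∂z_j + Σ_{q+1≤j≤n} 2i|λ_j| z̄_j ∂/∂z̄_j`. -/
def Tder {n : ℕ} (q : ℕ) (lam : Fin n → ℝ) (g : MvPolynomial (Var n) ℂ) :
    MvPolynomial (Var n) ℂ :=
  ∑ j : Fin n,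
    if (j : ℕ) < q then
      C (2 * Complex.I * ((|lam j| : ℝ) : ℂ)) * X (zV j) * pderiv (zV j) g
    else
      C (2 * Complex.I * ((|lam j| : ℝ) : ℂ)) * X (zbV j) * pderiv (zbV j) g

/-- The exponent function of the monomial `z̄^α z^β w̄^γ w^δ`. -/
def mIdx {n : ℕ} (α β γ δ : Fin n → ℕ) : Var n →₀ ℕ :=
  Finsupp.equivFunOnFinite.symm fun v =>
    if v.1 = 0 then β v.2
    else if v.1 = 1 then α v.2
    else if v.1 = 2 then δ v.2
    else γ v.2

/-- The condition `(α'', β') = (0,0)`. -/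
def cond0 {n : ℕ} (q : ℕ) (α β : Fin n → ℕ) : Prop :=
  ∀ j : Fin n, (q ≤ (j : ℕ) → α j = 0) ∧ ((j : ℕ) < q → β j = 0)

/-- `⟨|λ''|, α''⟩ + ⟨|λ'|, β'⟩`. -/
def wgt {n : ℕ} (q : ℕ) (lam : Fin n → ℝ) (α β : Fin n → ℕ) : ℝ :=
  ∑ j : Fin n, if (j : ℕ) < q then |lam j| * β j else |lam j| * α j

/-- `⟨λ'', α''⟩ + ⟨λ', β'⟩` (signed weight). -/
def swgt {n : ℕ} (q : ℕ) (lam : Fin n → ℝ) (α β : Fin n → ℕ) : ℝ :=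
  ∑ j : Fin n, if (j : ℕ) < q then lam j * β j else lam j * α j

/-- `α! = α_1! ⋯ α_n!`. -/
def factM {n : ℕ} (α : Fin n → ℕ) : ℕ := ∏ j : Fin n, (α j).factorial

/-!
`T` is diagonal in the monomial basis: it multiplies `z̄^α z^β w̄^γ w^δ` by
`2i(⟨|λ''|,α''⟩ + ⟨|λ'|,β'⟩)`, and the operator applied to `φ` on the right-hand side is diagonal
too, with eigenvalue `2(⟨λ'',α''⟩ + ⟨λ',β'⟩)`. The coefficients of `ψ` are those of `φ` times minus
the quotient of these eigenvalues. Since no `λ_j` vanishes, the eigenvalue of `T` is zero exactly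
when `(α'',β') = (0,0)`: there `T` does not see the coefficient of `ψ`, and the other eigenvalue is
zero as well.
-/

section WeightedEuler

variable {R σ ι : Type*} [CommSemiring R]

lemma coeff_X_mul_pderiv (m : σ →₀ ℕ) (i : σ) (p : MvPolynomial σ R) :
    coeff m (X i * pderiv i p) = m i * coeff m p := by
  classical
  induction p using MvPolynomial.induction_on' with
  | monomial s a =>
    rw [X_mul_pderiv_monomial, coeff_smul, coeff_monomial, nsmul_eq_mul]
    split_ifs with h
    · rw [h]
    · simp only [mul_zero]
  | add p r hp hr => simp only [map_add, mul_add, coeff_add, hp, hr]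

/-- The weighted Euler operator `∑ j, a_j x_{v(j)} ∂/∂x_{v(j)}` with weights `a` along a finite
family `v` of variables. -/
def weightedEuler [Fintype ι] (v : ι → σ) (a : ι → R) (p : MvPolynomial σ R) : MvPolynomial σ R :=
  ∑ j, C (a j) * X (v j) * pderiv (v j) p

lemma coeff_weightedEuler [Fintype ι] (v : ι → σ) (a : ι → R) (m : σ →₀ ℕ)
    (p : MvPolynomial σ R) :
    coeff m (weightedEuler v a p) = (∑ j, a j * m (v j)) * coeff m p := by
  simp only [weightedEuler, coeff_sum, mul_assoc, coeff_C_mul, coeff_X_mul_pderiv, Finset.sum_mul]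

end WeightedEuler

section ActiveVariables

variable {n : ℕ} (q : ℕ)

/-- The variable of index `j` that `T` differentiates: `z_j` for `j ≤ q` and `z̄_j` for `j > q`
in the paper's numbering from `1`. -/
def activeVar (j : Fin n) : Var n := if (j : ℕ) < q then zV j else zbV j

/-- The exponent of `activeVar q j` in `z̄^α z^β`; this family over `j` is `(β', α'')`. -/
def activeExp (α β : Fin n → ℕ) (j : Fin n) : ℕ := if (j : ℕ) < q then β j else α j

lemma mIdx_activeVar (α β γ δ : Fin n → ℕ) (j : Fin n) :
    mIdx α β γ δ (activeVar q j) = activeExp q α β j := by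
  unfold activeVar activeExp
  split_ifs <;> simp [mIdx, zV, zbV]

lemma exists_eq_mIdx (m : Var n →₀ ℕ) : ∃ α β γ δ, m = mIdx α β γ δ := by
  refine ⟨fun j => m (zbV j), fun j => m (zV j), fun j => m (wbV j), fun j => m (wV j), ?_⟩
  ext ⟨k, j⟩
  fin_cases k <;> simp [mIdx, zV, zbV, wV, wbV]

lemma weightedEuler_activeVar (a : Fin n → ℂ) (p : MvPolynomial (Var n) ℂ) :
    weightedEuler (activeVar q) a p =
      ∑ j : Fin n, if (j : ℕ) < q then C (a j) * X (zV j) * pderiv (zV j) p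
        else C (a j) * X (zbV j) * pderiv (zbV j) p := by
  refine Finset.sum_congr rfl fun j _ => ?_
  unfold activeVar
  split_ifs <;> rfl

variable {q} in
lemma cond0_iff_activeExp_eq_zero {α β : Fin n → ℕ} :
    cond0 q α β ↔ ∀ j, activeExp q α β j = 0 := by
  refine forall_congr' fun j => ?_
  unfold activeExp
  split_ifs with hj
  · simp [hj]
  · simp [hj, not_lt.mp hj]

variable (lam : Fin n → ℝ)

lemma wgt_eq_sum_activeExp (α β : Fin n → ℕ) :
    wgt q lam α β = ∑ j, |lam j| * activeExp q α β j := by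
  refine Finset.sum_congr rfl fun j _ => ?_
  unfold activeExp
  split_ifs <;> rfl

lemma swgt_eq_sum_activeExp (α β : Fin n → ℕ) :
    swgt q lam α β = ∑ j, lam j * activeExp q α β j := by
  refine Finset.sum_congr rfl fun j _ => ?_
  unfold activeExp
  split_ifs <;> rfl

variable {q lam} in
lemma wgt_eq_zero_iff (hlam : ∀ j, lam j ≠ 0) {α β : Fin n → ℕ} :
    wgt q lam α β = 0 ↔ cond0 q α β := by
  have nonneg (j : Fin n) : 0 ≤ |lam j| * activeExp q α β j := by positivity
  simp [wgt_eq_sum_activeExp, cond0_iff_activeExp_eq_zero,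
    Finset.sum_eq_zero_iff_of_nonneg fun j _ => nonneg j, hlam]

variable {q} in
lemma swgt_eq_zero_of_cond0 {α β : Fin n → ℕ} (h : cond0 q α β) : swgt q lam α β = 0 := by
  simp [swgt_eq_sum_activeExp, cond0_iff_activeExp_eq_zero.mp h]

lemma coeff_Tder (α β γ δ : Fin n → ℕ) (p : MvPolynomial (Var n) ℂ) :
    coeff (mIdx α β γ δ) (Tder q lam p) =
      2 * Complex.I * wgt q lam α β * coeff (mIdx α β γ δ) p := by
  rw [Tder, ← weightedEuler_activeVar, coeff_weightedEuler, wgt_eq_sum_activeExp]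
  simp only [mIdx_activeVar, Complex.ofReal_sum, Complex.ofReal_mul, Complex.ofReal_natCast,
    Finset.mul_sum, mul_assoc]

lemma coeff_weightedEuler_activeVar_two_mul (α β γ δ : Fin n → ℕ) (p : MvPolynomial (Var n) ℂ) :
    coeff (mIdx α β γ δ) (weightedEuler (activeVar q) (fun j => ((2 * lam j : ℝ) : ℂ)) p) =
      2 * swgt q lam α β * coeff (mIdx α β γ δ) p := by
  rw [coeff_weightedEuler, swgt_eq_sum_activeExp]
  simp only [mIdx_activeVar, Complex.ofReal_sum, Complex.ofReal_mul, Complex.ofReal_natCast,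
    Complex.ofReal_ofNat, Finset.mul_sum, mul_assoc]

end ActiveVariables

theorem statement2_general {n : ℕ} (q : ℕ) {lam : Fin n → ℝ} (hlam : ∀ j, lam j ≠ 0)
    {φ ψ : MvPolynomial (Var n) ℂ}
    (hψ : ∀ α β γ δ : Fin n → ℕ, ¬ cond0 q α β →
      coeff (mIdx α β γ δ) ψ =
        Complex.I * ((swgt q lam α β / wgt q lam α β : ℝ) : ℂ) * coeff (mIdx α β γ δ) φ) :
    Tder q lam ψ =
      - ∑ j : Fin n,
          (if (j : ℕ) < q then
            C ((2 * lam j : ℝ) : ℂ) * X (zV j) * pderiv (zV j) φ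
          else
            C ((2 * lam j : ℝ) : ℂ) * X (zbV j) * pderiv (zbV j) φ) := by
  rw [← weightedEuler_activeVar q fun j => ((2 * lam j : ℝ) : ℂ)]
  ext m
  obtain ⟨α, β, γ, δ, rfl⟩ := exists_eq_mIdx m
  rw [coeff_neg, coeff_Tder, coeff_weightedEuler_activeVar_two_mul]
  by_cases h : cond0 q α β
  · simp [(wgt_eq_zero_iff hlam).mpr h, swgt_eq_zero_of_cond0 lam h]
  · have wgt_ne_zero : (wgt q lam α β : ℂ) ≠ 0 :=
      Complex.ofReal_ne_zero.mpr ((wgt_eq_zero_iff hlam).not.mpr h)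
    rw [hψ α β γ δ h, Complex.ofReal_div]
    field_simp
    rw [Complex.I_sq]
    ring

/-- with `φ₃ = Σ_{|α|+|β|=3} (c_{α,β}/(α!β!)) z̄^α z^β` and
`ψ₃⁰ = i Σ_{|α|+|β|=3, (α'',β')≠0} ((⟨λ'',α''⟩+⟨λ',β'⟩)/(⟨|λ''|,α''⟩+⟨|λ'|,β'⟩))
(c_{α,β}/(α!β!)) z̄^α z^β` (both described through their coefficients), one has
`T ψ₃⁰ = − Σ_{j≤q} 2λ_j z_j ∂φ₃/∂z_j − Σ_{j>q} 2λ_j z̄_j ∂φ₃/∂z̄_j`. -/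
theorem statement2 (n q : ℕ) (hn : 1 ≤ n) (hq : q ≤ n) (lam : Fin n → ℝ)
    (hneg : ∀ j : Fin n, (j : ℕ) < q → lam j < 0)
    (hpos : ∀ j : Fin n, q ≤ (j : ℕ) → 0 < lam j)
    (c : (Fin n → ℕ) → (Fin n → ℕ) → ℂ)
    (φ₃ ψ₃₀ : MvPolynomial (Var n) ℂ)
    (hφ : ∀ α β γ δ : Fin n → ℕ,
      coeff (mIdx α β γ δ) φ₃ =
        if (∑ j, α j) + (∑ j, β j) = 3 ∧ γ = 0 ∧ δ = 0 then
          c α β / ((factM α * factM β : ℕ) : ℂ)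
        else 0)
    (hψ : ∀ α β γ δ : Fin n → ℕ,
      coeff (mIdx α β γ δ) ψ₃₀ =
        if (∑ j, α j) + (∑ j, β j) = 3 ∧ γ = 0 ∧ δ = 0 ∧ ¬ cond0 q α β then
          Complex.I * ((swgt q lam α β / wgt q lam α β : ℝ) : ℂ) *
            (c α β / ((factM α * factM β : ℕ) : ℂ))
        else 0) :
    Tder q lam ψ₃₀ =
      - ∑ j : Fin n,
          (if (j : ℕ) < q then
            C ((2 * lam j : ℝ) : ℂ) * X (zV j) * pderiv (zV j) φ₃
          else
            C ((2 * lam j : ℝ) : ℂ) * X (zbV j) * pderiv (zbV j) φ₃) := by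
  have hlam (j : Fin n) : lam j ≠ 0 := (lt_or_ge (j : ℕ) q).elim (hneg j · |>.ne) (hpos j · |>.ne')
  exact statement2_general q hlam fun α β γ δ h => by simp [hφ, hψ, h]
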